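/- Let Q = 2N+2 and let Ω ⊆ ℍᴺ be an open set satisfying the measure density condition: there exists C₁ > 0 such that |B(ξ,r) ∩ Ω| ≥ C₁ r^Q for all ξ ∈ Ω and all r ∈ (0,1]. Then the Lebesgue measure of the set Ω̄ ∖ Ω (the closure of Ω minus Ω) is zero. -/

import Mathlib

open MeasureTheory Real Filter
open scoped ENNReal Topology

noncomputable section

/-- Points of the Heisenberg group `ℍᴺ = ℝᴺ × ℝᴺ × ℝ`. -/
abbrev H (N : ℕ) := (Fin N → ℝ) × (Fin N → ℝ) × ℝ

namespace Heis

/-- Heisenberg group multiplication. -/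
def hmul {N : ℕ} (a b : H N) : H N :=
  (a.1 + b.1, a.2.1 + b.2.1,
    a.2.2 + b.2.2 + 2 * (∑ i, b.1 i * a.2.1 i) - 2 * (∑ i, a.1 i * b.2.1 i))

/-- Heisenberg group inverse. -/
def hinv {N : ℕ} (a : H N) : H N := (-a.1, -a.2.1, -a.2.2)

/-- The homogeneous norm `|ξ| = (|z|⁴ + s²)^{1/4}`. -/
def hnorm {N : ℕ} (a : H N) : ℝ :=
  (((∑ i, (a.1 i)^2) + (∑ i, (a.2.1 i)^2))^2 + (a.2.2)^2) ^ ((4:ℝ)⁻¹)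

/-- `hdist a b = |a⁻¹ ∘ b|`. -/
def hdist {N : ℕ} (a b : H N) : ℝ := hnorm (hmul (hinv a) b)

/-- The ball `B(c,r) = {ξ : |c⁻¹∘ξ| < r}`. -/
def ball {N : ℕ} (c : H N) (r : ℝ) : Set (H N) := {x | hdist c x < r}

/-- Homogeneous dimension `Q = 2N+2` as a real number. -/
def QQ (N : ℕ) : ℝ := 2*N + 2

/-!
For a compact set `k` in a unimodular group, the measure of `{x ∈ k | x * a ∉ k}` tends to `0` as
`a → 1`. Averaging over `a` in a small compact set `A` and exchanging the two integrals, the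
proportion of `x • A` lying outside `k` tends to `0` in mean over `x ∈ k` as `A` shrinks to `1`.

Now let `k ⊆ closure Ω \ Ω`. A lower bound for the density of `Ω` in `x • A` passes from `x ∈ Ω` to
`x ∈ closure Ω`, because the measure of `x • A ∩ Ω` is upper semicontinuous in `x`. As `Ω` is
disjoint from `k`, the mean above stays bounded below, so `k` is null. This averaging takes the
place of the Lebesgue density theorem and needs neither a covering lemma nor the triangle
inequality for the homogeneous norm.
-/

section Density

open scoped Pointwise

variable {G : Type*} [MeasurableSpace G] {μ : Measure G}

lemma setLIntegral_measure_inter_preimage_mul_comm [Mul G] [MeasurableMul₂ G] [SFinite μ]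
    {A s t : Set G} (hA : MeasurableSet A) (hs : MeasurableSet s) (ht : MeasurableSet t) :
    ∫⁻ x in s, μ (A ∩ (x * ·) ⁻¹' t) ∂μ = ∫⁻ a in A, μ (s ∩ (· * a) ⁻¹' t) ∂μ := by
  have hE : MeasurableSet {p : G × G | p.1 * p.2 ∈ t} := measurable_mul ht
  have fubini := (Measure.prod_apply (μ := μ.restrict s) (ν := μ.restrict A) hE).symm.trans
    (Measure.prod_apply_symm hE)
  simp only [Measure.restrict_apply' hA, Measure.restrict_apply' hs, Set.inter_comm _ A,
    Set.inter_comm _ s] at fubini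
  exact fubini

variable [Group G] [TopologicalSpace G] [IsTopologicalGroup G] [BorelSpace G]
  [LocallyCompactSpace G] [IsFiniteMeasureOnCompacts μ]

lemma tendsto_measure_sdiff_preimage_mul_right [μ.IsMulRightInvariant]
    [μ.InnerRegularCompactLTTop] {k : Set G} (hk : IsCompact k) (hk' : IsClosed k) :
    Tendsto (fun g : G ↦ μ (k \ (· * g) ⁻¹' k)) (𝓝 1) (𝓝 0) := by
  refine ENNReal.nhds_zero_basis.tendsto_right_iff.mpr fun ε hε ↦ ?_
  obtain ⟨U, hkU, hU, hμU⟩ := hk.exists_isOpen_lt_add (μ := μ) hε.ne'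
  obtain ⟨V, hV, hkVU⟩ := compact_open_separated_mul_right hk hU hkU
  filter_upwards [hV] with g hg
  calc
    μ (k \ (· * g) ⁻¹' k) ≤ μ ((· * g) ⁻¹' (U \ k)) :=
      measure_mono fun x hx ↦ ⟨hkVU (Set.mul_mem_mul hx.1 hg), hx.2⟩
    _ = μ (U \ k) := measure_preimage_mul_right μ g _
    _ < ε := measure_sdiff_lt_of_lt_add hk'.nullMeasurableSet hkU hk.measure_lt_top.ne hμU

lemma upperSemicontinuous_measure_smul_inter [μ.IsMulLeftInvariant]
    [μ.InnerRegularCompactLTTop] {k : Set G} (hk : IsCompact k) (hk' : IsClosed k) (t : Set G) :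
    UpperSemicontinuous fun x : G ↦ μ (x • k ∩ t) := by
  intro x b hb
  have hshift : Tendsto (fun y : G ↦ x⁻¹ * y) (𝓝 x) (𝓝 1) :=
    (continuous_const_mul x⁻¹).tendsto' x 1 (inv_mul_cancel x)
  have hlim : Tendsto (fun y : G ↦ μ (x • k ∩ t) + μ ((x⁻¹ * y) • k \ k)) (𝓝 x)
      (𝓝 (μ (x • k ∩ t))) := by
    simpa only [add_zero, Function.comp_def] using
      ((tendsto_measure_smul_sdiff_isCompact_isClosed hk hk').comp hshift).const_add _
  filter_upwards [hlim.eventually_lt_const hb] with y hy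
  refine lt_of_le_of_lt ?_ hy
  calc
    μ (y • k ∩ t) ≤ μ (x • k ∩ t ∪ y • k \ x • k) :=
      measure_mono fun z hz ↦ by by_cases h : z ∈ x • k <;> simp_all
    _ ≤ μ (x • k ∩ t) + μ (y • k \ x • k) := measure_union_le _ _
    _ = μ (x • k ∩ t) + μ ((x⁻¹ * y) • k \ k) := by
      rw [mul_smul, measure_inv_smul_sdiff]

variable [SecondCountableTopology G] [T2Space G] [μ.IsMulRightInvariant] [μ.IsMulLeftInvariant]
  {c : ℝ≥0∞}

lemma measure_eq_zero_of_frequently_le_measure_smul_sdiff {k : Set G}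
    (hk : IsCompact k) (hc : c ≠ 0)
    (hdens : ∃ᶠ A in (𝓝 (1 : G)).smallSets,
      IsCompact A ∧ μ A ≠ 0 ∧ ∀ x ∈ k, c * μ A ≤ μ (x • A \ k)) :
    μ k = 0 := by
  suffices h : ∀ ε > 0, c * μ k ≤ ε from
    (mul_eq_zero.mp (nonpos_iff_eq_zero.mp (le_of_forall_gt_imp_ge_of_dense h))).resolve_left hc
  intro ε hε
  have hsmall : ∀ᶠ a in 𝓝 (1 : G), μ (k \ (· * a) ⁻¹' k) < ε :=
    (tendsto_measure_sdiff_preimage_mul_right hk hk.isClosed).eventually_lt_const hε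
  obtain ⟨A, ⟨hA, hA₀, hdensA⟩, hAε⟩ :=
    (hdens.and_eventually hsmall.smallSets).exists
  refine (ENNReal.mul_le_mul_iff_left hA₀ hA.measure_lt_top.ne).mp ?_
  calc
    c * μ k * μ A = ∫⁻ _ in k, c * μ A ∂μ := by rw [setLIntegral_const, mul_right_comm]
    _ ≤ ∫⁻ x in k, μ (A ∩ (x * ·) ⁻¹' kᶜ) ∂μ := by
      refine setLIntegral_mono' hk.measurableSet fun x hx ↦ (hdensA x hx).trans_eq ?_
      rw [Set.sdiff_eq, ← measure_inter_inv_smul, ← Set.preimage_smul]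
      rfl
    _ = ∫⁻ a in A, μ (k ∩ (· * a) ⁻¹' kᶜ) ∂μ :=
      setLIntegral_measure_inter_preimage_mul_comm hA.measurableSet hk.measurableSet
        hk.measurableSet.compl
    _ ≤ ∫⁻ _ in A, ε ∂μ := setLIntegral_mono' hA.measurableSet fun a ha ↦ (hAε a ha).le
    _ = ε * μ A := setLIntegral_const _ _

theorem measure_closure_sdiff_eq_zero_of_frequently_le_measure_smul_inter {Ω : Set G}
    (hΩ : MeasurableSet Ω) (hc : c ≠ 0)
    (hdens : ∃ᶠ A in (𝓝 (1 : G)).smallSets,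
      IsCompact A ∧ μ A ≠ 0 ∧ ∀ x ∈ Ω, c * μ A ≤ μ (x • A ∩ Ω)) :
    μ (closure Ω \ Ω) = 0 := by
  rw [(isClosed_closure.measurableSet.diff hΩ).measure_eq_iSup_isCompact]
  simp only [ENNReal.iSup_eq_zero]
  intro k hkΩ hk
  refine measure_eq_zero_of_frequently_le_measure_smul_sdiff hk hc (hdens.mono ?_)
  rintro A ⟨hA, hA₀, hdensA⟩
  have hclosure : closure Ω ⊆ {x | c * μ A ≤ μ (x • A ∩ Ω)} :=
    closure_minimal hdensA <|
      (upperSemicontinuous_measure_smul_inter hA hA.isClosed Ω).isClosed_preimage _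
  refine ⟨hA, hA₀, fun x hx ↦ (hclosure (hkΩ hx).1).trans (measure_mono ?_)⟩
  exact fun y hy ↦ ⟨hy.1, fun hyk ↦ (hkΩ hyk).2 hy.2⟩

end Density

section GroupLaw

variable {N : ℕ}

lemma hmul_assoc (a b c : H N) : hmul (hmul a b) c = hmul a (hmul b c) := by
  refine Prod.ext (add_assoc _ _ _) (Prod.ext (add_assoc _ _ _) ?_)
  simp only [hmul, Pi.add_apply, add_mul, mul_add, Finset.sum_add_distrib]
  ring

lemma zero_hmul (a : H N) : hmul 0 a = a := by
  simp [hmul]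

lemma hinv_hmul_cancel (a : H N) : hmul (hinv a) a = 0 := by
  simp [hmul, hinv]

lemma continuous_hmul : Continuous fun p : H N × H N ↦ hmul p.1 p.2 := by
  unfold hmul
  fun_prop

lemma measurePreserving_hmul_left (a : H N) : MeasurePreserving (hmul a) := by
  have hfiber (x : Fin N → ℝ) : MeasurePreserving fun q : (Fin N → ℝ) × ℝ ↦
      (a.2.1 + q.1, a.2.2 + q.2 + 2 * (∑ i, x i * a.2.1 i) - 2 * (∑ i, a.1 i * q.1 i)) := by
    refine (measurePreserving_add_left volume a.2.1).skew_product
      (g := fun y s ↦ a.2.2 + s + 2 * (∑ i, x i * a.2.1 i) - 2 * (∑ i, a.1 i * y i))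
      (by fun_prop) (Eventually.of_forall fun y ↦ ?_)
    exact ((measurePreserving_sub_right volume _).comp ((measurePreserving_add_right volume _).comp
      (measurePreserving_add_left volume _))).map_eq
  exact (measurePreserving_add_left volume a.1).skew_product
    (g := fun x (q : (Fin N → ℝ) × ℝ) ↦
      (a.2.1 + q.1, a.2.2 + q.2 + 2 * (∑ i, x i * a.2.1 i) - 2 * (∑ i, a.1 i * q.1 i)))
    (by fun_prop) (Eventually.of_forall fun x ↦ (hfiber x).map_eq)

lemma measurePreserving_hinv : MeasurePreserving (hinv : H N → H N) :=
  (Measure.measurePreserving_neg volume).prod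
    ((Measure.measurePreserving_neg volume).prod (Measure.measurePreserving_neg volume))

/-- The Heisenberg group `ℍᴺ` as a `Group`. It is a type synonym of `H N` because `H N`, being a
product, already carries the coordinatewise multiplication. -/
def HeisenbergGroup (N : ℕ) := H N

namespace HeisenbergGroup

instance : Mul (HeisenbergGroup N) := ⟨hmul⟩
instance : Inv (HeisenbergGroup N) := ⟨hinv⟩
instance : One (HeisenbergGroup N) := ⟨(0 : H N)⟩
instance : Group (HeisenbergGroup N) := Group.ofLeftAxioms hmul_assoc zero_hmul hinv_hmul_cancel

instance : TopologicalSpace (HeisenbergGroup N) := inferInstanceAs (TopologicalSpace (H N))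
instance : T2Space (HeisenbergGroup N) := inferInstanceAs (T2Space (H N))
instance : LocallyCompactSpace (HeisenbergGroup N) := inferInstanceAs (LocallyCompactSpace (H N))
instance : SecondCountableTopology (HeisenbergGroup N) :=
  inferInstanceAs (SecondCountableTopology (H N))
instance : IsTopologicalGroup (HeisenbergGroup N) where
  continuous_mul := continuous_hmul
  continuous_inv := (continuous_neg : Continuous fun a : H N ↦ -a)

instance : MeasureSpace (HeisenbergGroup N) := inferInstanceAs (MeasureSpace (H N))
instance : BorelSpace (HeisenbergGroup N) := inferInstanceAs (BorelSpace (H N))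
instance : IsFiniteMeasureOnCompacts (volume : Measure (HeisenbergGroup N)) :=
  inferInstanceAs (IsFiniteMeasureOnCompacts (volume : Measure (H N)))
instance : (volume : Measure (HeisenbergGroup N)).IsMulLeftInvariant :=
  ⟨fun a ↦ (measurePreserving_hmul_left a).map_eq⟩
instance : (volume : Measure (HeisenbergGroup N)).IsInvInvariant := ⟨measurePreserving_hinv.map_eq⟩
instance : (volume : Measure (HeisenbergGroup N)).IsMulRightInvariant :=
  Measure.inv_eq_self (volume : Measure (HeisenbergGroup N)) ▸ inferInstance

end HeisenbergGroup

end GroupLaw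

section Box

variable {N : ℕ} {r : ℝ}

/-- The box `[-r, r]ᴺ × [-r, r]ᴺ × [-r², r²]`, a compact neighbourhood of the identity that
contains the ball of the same radius and, unlike the ball, has an explicit volume. -/
def box (N : ℕ) (r : ℝ) : Set (H N) :=
  Metric.closedBall 0 r ×ˢ Metric.closedBall 0 r ×ˢ Metric.closedBall 0 (r ^ 2)

lemma isCompact_box (N : ℕ) (r : ℝ) : IsCompact (box N r) :=
  (isCompact_closedBall _ _).prod ((isCompact_closedBall _ _).prod (isCompact_closedBall _ _))

lemma box_subset_closedBall (hr : 0 ≤ r) (hr1 : r ≤ 1) : box N r ⊆ Metric.closedBall 0 r := by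
  have hsq : r ^ 2 ≤ r := pow_le_of_le_one hr hr1 two_ne_zero
  rw [Prod.zero_eq_mk, ← closedBall_prod_same, Prod.zero_eq_mk, ← closedBall_prod_same]
  exact Set.prod_mono_right (Set.prod_mono_right (Metric.closedBall_subset_closedBall hsq))

lemma tendsto_box_smallSets (N : ℕ) : Tendsto (box N) (𝓝[>] 0) (𝓝 0).smallSets := by
  refine ((tendsto_closedBall_smallSets 0).mono_left nhdsWithin_le_nhds).smallSets_mono ?_
  filter_upwards [Ioc_mem_nhdsGT one_pos] with r hr using box_subset_closedBall hr.1.le hr.2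

lemma rpow_QQ (N : ℕ) (r : ℝ) : r ^ QQ N = r ^ (2 * N + 2) := by
  rw [← Real.rpow_natCast, QQ]
  norm_cast

lemma volume_box (N : ℕ) (hr : 0 ≤ r) :
    volume (box N r) = ENNReal.ofReal (2 ^ (2 * N + 1) * r ^ QQ N) := by
  rw [box, Measure.volume_eq_prod, Measure.prod_prod, Measure.volume_eq_prod, Measure.prod_prod,
    Real.volume_pi_closedBall _ hr, Real.volume_closedBall, ← ENNReal.ofReal_mul (by positivity),
    ← ENNReal.ofReal_mul (by positivity), rpow_QQ, Fintype.card_fin]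
  ring_nf

lemma mem_closedBall_of_sum_sq_le {x : Fin N → ℝ} (hr : 0 ≤ r) (hx : ∑ i, x i ^ 2 ≤ r ^ 2) :
    x ∈ Metric.closedBall 0 r := by
  rw [mem_closedBall_zero_iff, pi_norm_le_iff_of_nonneg hr]
  exact fun i ↦ abs_le_of_sq_le_sq
    ((Finset.single_le_sum (fun j _ ↦ sq_nonneg (x j)) (Finset.mem_univ i)).trans hx) hr

lemma mem_box_of_hnorm_le {a : H N} (ha : hnorm a ≤ r) : a ∈ box N r := by
  have hr : 0 ≤ r := le_trans (by unfold hnorm; positivity) ha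
  have hx : 0 ≤ ∑ i, a.1 i ^ 2 := by positivity
  have hy : 0 ≤ ∑ i, a.2.1 i ^ 2 := by positivity
  have h4 : (∑ i, a.1 i ^ 2 + ∑ i, a.2.1 i ^ 2) ^ 2 + a.2.2 ^ 2 ≤ (r ^ 2) ^ 2 := by
    rw [← pow_mul, ← Real.rpow_natCast r]
    exact (Real.rpow_inv_le_iff_of_pos (by positivity) hr (by norm_num)).mp ha
  have hz : ∑ i, a.1 i ^ 2 + ∑ i, a.2.1 i ^ 2 ≤ r ^ 2 :=
    le_of_sq_le_sq ((le_add_of_nonneg_right (sq_nonneg _)).trans h4) (by positivity)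
  refine ⟨mem_closedBall_of_sum_sq_le hr (by linarith),
    mem_closedBall_of_sum_sq_le hr (by linarith), ?_⟩
  rw [mem_closedBall_zero_iff]
  exact abs_le_of_sq_le_sq ((le_add_of_nonneg_left (sq_nonneg _)).trans h4) (by positivity)

lemma ball_subset_image_hmul_box (ξ : H N) (r : ℝ) : ball ξ r ⊆ hmul ξ '' box N r :=
  fun x hx ↦ ⟨hmul (hinv ξ) x, mem_box_of_hnorm_le (le_of_lt hx),
    mul_inv_cancel_left (G := HeisenbergGroup N) ξ x⟩

end Box

theorem measure_density_closure_null_general {N : ℕ} {Ω : Set (H N)} (hΩ : MeasurableSet Ω)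
    {C₁ : ℝ} (hC₁ : 0 < C₁)
    (hdens : ∃ᶠ r in 𝓝[>] (0 : ℝ), ∀ ξ ∈ Ω,
      ENNReal.ofReal (C₁ * r ^ QQ N) ≤ volume (ball ξ r ∩ Ω)) :
    volume (closure Ω \ Ω) = 0 := by
  have hc : ENNReal.ofReal (C₁ / 2 ^ (2 * N + 1)) ≠ 0 :=
    (ENNReal.ofReal_pos.mpr (by positivity)).ne'
  refine measure_closure_sdiff_eq_zero_of_frequently_le_measure_smul_inter
    (μ := (volume : Measure (HeisenbergGroup N))) hΩ hc ((tendsto_box_smallSets N).frequently ?_)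
  refine (hdens.and_eventually self_mem_nhdsWithin).mono ?_
  rintro r ⟨hball, hr : 0 < r⟩
  have hvol : volume (box N r) = ENNReal.ofReal (2 ^ (2 * N + 1) * r ^ QQ N) := volume_box N hr.le
  refine ⟨isCompact_box N r, ?_, fun ξ hξ ↦ ?_⟩
  · exact hvol.trans_ne (ENNReal.ofReal_pos.mpr (by positivity)).ne'
  · calc
      ENNReal.ofReal (C₁ / 2 ^ (2 * N + 1)) * volume (box N r)
          = ENNReal.ofReal (C₁ * r ^ QQ N) := by
        rw [hvol, ← ENNReal.ofReal_mul (by positivity)]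
        congr 1
        field_simp
      _ ≤ volume (ball ξ r ∩ Ω) := hball ξ hξ
      _ ≤ volume (hmul ξ '' box N r ∩ Ω) :=
        measure_mono (Set.inter_subset_inter_left Ω (ball_subset_image_hmul_box ξ r))

/-- measure density implies the boundary is null. -/
theorem measure_density_closure_null (N : ℕ) (hN : 1 ≤ N) (Ω : Set (H N))
    (hΩopen : IsOpen Ω)
    (hdens : ∃ C₁ : ℝ, 0 < C₁ ∧ ∀ ξ ∈ Ω, ∀ r : ℝ, 0 < r → r ≤ 1 →
      ENNReal.ofReal (C₁ * r ^ QQ N) ≤ volume (ball ξ r ∩ Ω)) :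
    volume (closure Ω \ Ω) = 0 := by
  obtain ⟨C₁, hC₁, hdens⟩ := hdens
  exact measure_density_closure_null_general hΩopen.measurableSet hC₁ <| Eventually.frequently <|
    mem_of_superset (Ioc_mem_nhdsGT one_pos) fun r hr ξ hξ ↦ hdens ξ hξ r hr.1 hr.2

end Heis
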